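/- Let μ > 0 and let f : [0,1] → ℝ be such that f_μ := f/ln_μ is monotone increasing and convex on [0,1]. Then for every positive integer n and every x ∈ (0,1), L_n(f, x) ≥ L_{n+1}(f, x) ≥ f(x). -/

import Mathlib

open Real Filter Set

/-- `logμ μ x = ln(1+μ+x)`. -/
noncomputable def logμ (μ x : ℝ) : ℝ := Real.log (1 + μ + x)

/-- `a μ n x = ln(1 + x/(n(1+μ))) / ln(1 + 1/(n(1+μ)))`. -/
noncomputable def aFun (μ : ℝ) (n : ℕ) (x : ℝ) : ℝ :=
  Real.log (1 + x / (n * (1 + μ))) / Real.log (1 + 1 / (n * (1 + μ)))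

/-- Bernstein basis polynomial `p_{n,k}(y) = C(n,k) y^k (1-y)^(n-k)`. -/
noncomputable def pB (n k : ℕ) (y : ℝ) : ℝ :=
  (n.choose k : ℝ) * y ^ k * (1 - y) ^ (n - k)

/-- Classical Bernstein operator. -/
noncomputable def Bop (n : ℕ) (g : ℝ → ℝ) (y : ℝ) : ℝ :=
  ∑ k ∈ Finset.range (n + 1), g ((k : ℝ) / (n : ℝ)) * pB n k y

/-- Bernstein-type logarithmic operator `L_n`. -/
noncomputable def Lop (μ : ℝ) (n : ℕ) (f : ℝ → ℝ) (x : ℝ) : ℝ :=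
  logμ μ x * ∑ k ∈ Finset.range (n + 1),
    f ((k : ℝ) / (n : ℝ)) * (1 / logμ μ ((k : ℝ) / (n : ℝ))) * pB n k (aFun μ n x)

/-!
The factor `ln_μ(x) > 0` in front of `L_n(f, x)` leaves the classical Bernstein operator of `f_μ`
evaluated at `a_n(x)`. The inequality `L_{n+1}(f, x) ≤ L_n(f, x)` splits into a change of degree
and a change of evaluation point. Degree elevation writes the `n`-th Bernstein polynomial of the
convex `f_μ` in degree `n + 1`, with coefficients that Jensen's inequality compares to the nodal
values of `f_μ`. The Bernstein polynomial of the increasing `f_μ` is increasing, and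
`a_{n+1}(x) ≤ a_n(x)` because `s ↦ ln(1 + x s) / ln(1 + s)` is increasing.
For `f(x) ≤ L_{n+1}(f, x)`, Bernoulli's inequality gives `x ≤ a_{n+1}(x)`, hence
`f_μ(x) ≤ f_μ(a_{n+1}(x))`, and Jensen's inequality at the nodes bounds the latter by the Bernstein
polynomial.
-/

section BernsteinBasis

variable {n k : ℕ} {y : ℝ}

theorem pB_eq_eval_bernsteinPolynomial (n k : ℕ) (y : ℝ) :
    pB n k y = (bernsteinPolynomial ℝ n k).eval y := by
  simp [pB, bernsteinPolynomial]

theorem pB_nonneg (n k : ℕ) (hy : y ∈ Icc (0 : ℝ) 1) : 0 ≤ pB n k y :=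
  mul_nonneg (mul_nonneg (Nat.cast_nonneg _) (pow_nonneg hy.1 _))
    (pow_nonneg (sub_nonneg.2 hy.2) _)

theorem sum_pB (n : ℕ) (y : ℝ) : ∑ k ∈ Finset.range (n + 1), pB n k y = 1 := by
  simp only [pB_eq_eval_bernsteinPolynomial, ← Polynomial.eval_finsetSum,
    bernsteinPolynomial.sum, Polynomial.eval_one]

theorem sum_pB_mul_natCast (n : ℕ) (y : ℝ) :
    ∑ k ∈ Finset.range (n + 1), pB n k y * k = n * y := by
  simpa [Polynomial.eval_finsetSum, ← pB_eq_eval_bernsteinPolynomial, mul_comm] using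
    congrArg (Polynomial.eval y) (bernsteinPolynomial.sum_smul ℝ n)

theorem pB_eq_zero_of_lt (h : n < k) (y : ℝ) : pB n k y = 0 := by
  rw [pB_eq_eval_bernsteinPolynomial, bernsteinPolynomial.eq_zero_of_lt ℝ h, Polynomial.eval_zero]

theorem pB_succ_zero (n : ℕ) (y : ℝ) : pB (n + 1) 0 y = (1 - y) * pB n 0 y := by
  simp [pB, pow_succ']

theorem pB_succ_succ (n k : ℕ) (y : ℝ) :
    pB (n + 1) (k + 1) y = y * pB n k y + (1 - y) * pB n (k + 1) y := by
  rcases lt_or_ge k n with hkn | hnk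
  · have hpow : (1 - y) ^ (n - k) = (1 - y) ^ (n - (k + 1)) * (1 - y) := by
      rw [← pow_succ]
      congr 1
      lia
    simp only [pB, Nat.choose_succ_succ', Nat.add_sub_add_right, hpow]
    push_cast
    ring
  · rw [pB_eq_zero_of_lt (Nat.lt_succ_of_le hnk)]
    simp only [pB, Nat.choose_succ_succ', Nat.choose_eq_zero_of_lt (Nat.lt_succ_of_le hnk),
      Nat.add_sub_add_right]
    push_cast
    ring

theorem pB_degree_elevation (hk : k ≤ n) (y : ℝ) :
    pB n k y = (n + 1 - k) / (n + 1) * pB (n + 1) k y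
      + (k + 1) / (n + 1) * pB (n + 1) (k + 1) y := by
  have choose_left : (n.choose k : ℝ) * (n + 1) = (n + 1).choose k * (n + 1 - k) := by
    have h := congrArg (Nat.cast : ℕ → ℝ) (Nat.choose_mul_succ_eq n k)
    rwa [Nat.cast_mul, Nat.cast_mul, Nat.cast_sub (hk.trans n.le_succ), Nat.cast_succ] at h
  have choose_right : ((n : ℝ) + 1) * n.choose k = (n + 1).choose (k + 1) * (k + 1) :=
    mod_cast Nat.add_one_mul_choose_eq n k
  simp only [pB, Nat.add_sub_add_right, Nat.succ_sub hk, pow_succ]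
  field_simp
  linear_combination (y ^ k * (1 - y) ^ (n - k)) * ((1 - y) * choose_left + y * choose_right)

end BernsteinBasis

section BernsteinForm

variable {n : ℕ} {c d : ℕ → ℝ} {y : ℝ}

/-- The polynomial `∑ k ≤ n, c k * p_{n,k}` in Bernstein form. Only the values of `c` on `{0, …, n}`
matter; coefficients are indexed by `ℕ` so that they can be shifted and the degree can vary. -/
noncomputable def bernsteinForm (n : ℕ) (c : ℕ → ℝ) (y : ℝ) : ℝ :=
  ∑ k ∈ Finset.range (n + 1), c k * pB n k y

theorem Bop_eq_bernsteinForm (n : ℕ) (g : ℝ → ℝ) (y : ℝ) :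
    Bop n g y = bernsteinForm n (fun k => g (k / n)) y :=
  rfl

theorem bernsteinForm_le_bernsteinForm (hcd : ∀ k ≤ n, c k ≤ d k) (hy : y ∈ Icc (0 : ℝ) 1) :
    bernsteinForm n c y ≤ bernsteinForm n d y :=
  Finset.sum_le_sum fun k hk =>
    mul_le_mul_of_nonneg_right (hcd k (Finset.mem_range_succ_iff.1 hk)) (pB_nonneg n k hy)

theorem bernsteinForm_deCasteljau (n : ℕ) (c : ℕ → ℝ) (y : ℝ) :
    bernsteinForm (n + 1) c y
      = (1 - y) * bernsteinForm n c y + y * bernsteinForm n (fun k => c (k + 1)) y := by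
  have split_first : bernsteinForm n c y
      = ∑ k ∈ Finset.range (n + 1), c (k + 1) * pB n (k + 1) y + c 0 * pB n 0 y := by
    rw [← Finset.sum_range_succ' (fun k => c k * pB n k y), Finset.sum_range_succ _ (n + 1),
      pB_eq_zero_of_lt n.lt_succ_self, mul_zero, add_zero, bernsteinForm]
  rw [split_first, bernsteinForm, bernsteinForm, Finset.sum_range_succ', pB_succ_zero]
  simp only [pB_succ_succ, mul_add, Finset.mul_sum, Finset.sum_add_distrib, mul_left_comm]
  ring

theorem monotoneOn_bernsteinForm (hc : MonotoneOn c (Iic n)) :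
    MonotoneOn (bernsteinForm n c) (Icc 0 1) := by
  induction n generalizing c with
  | zero => simp [bernsteinForm, pB, MonotoneOn]
  | succ n ih =>
    intro y hy z hz hyz
    have hc_init : MonotoneOn c (Iic n) := hc.mono (Iic_subset_Iic.2 n.le_succ)
    have hc_shift : MonotoneOn (fun k => c (k + 1)) (Iic n) := fun i hi j hj hij =>
      hc (Nat.succ_le_succ hi) (Nat.succ_le_succ hj) (Nat.succ_le_succ hij)
    have h_init := ih hc_init hy hz hyz
    have h_shift := ih hc_shift hy hz hyz
    have h_init_shift : bernsteinForm n c z ≤ bernsteinForm n (fun k => c (k + 1)) z :=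
      bernsteinForm_le_bernsteinForm (fun k hk =>
        hc (hk.trans n.le_succ) (Nat.succ_le_succ hk) k.le_succ) hz
    rw [bernsteinForm_deCasteljau, bernsteinForm_deCasteljau]
    calc (1 - y) * bernsteinForm n c y + y * bernsteinForm n (fun k => c (k + 1)) y
        ≤ (1 - y) * bernsteinForm n c z + y * bernsteinForm n (fun k => c (k + 1)) z :=
          add_le_add (mul_le_mul_of_nonneg_left h_init (sub_nonneg.2 hy.2))
            (mul_le_mul_of_nonneg_left h_shift hy.1)
      _ ≤ (1 - z) * bernsteinForm n c z + z * bernsteinForm n (fun k => c (k + 1)) z := by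
          linear_combination mul_le_mul_of_nonneg_left h_init_shift (sub_nonneg.2 hyz)

-- At `k = 0` the truncated `k - 1` carries weight `0`, and so does `c (n + 1)` at `k = n + 1`.
theorem bernsteinForm_degree_elevation (n : ℕ) (c : ℕ → ℝ) (y : ℝ) :
    bernsteinForm n c y
      = bernsteinForm (n + 1) (fun k => k / (n + 1) * c (k - 1) + (n + 1 - k) / (n + 1) * c k)
          y := by
  simp only [bernsteinForm, add_mul]
  rw [Finset.sum_add_distrib, Finset.sum_range_succ' _ (n + 1), Finset.sum_range_succ _ (n + 1)]
  simp only [Nat.cast_zero, zero_div, zero_mul, add_zero, Nat.cast_add, Nat.cast_one, sub_self,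
    Nat.add_sub_cancel]
  rw [← Finset.sum_add_distrib]
  refine Finset.sum_congr rfl fun k hk => ?_
  rw [pB_degree_elevation (Finset.mem_range_succ_iff.1 hk)]
  ring

end BernsteinForm

section BernsteinOperator

variable {n k : ℕ} {g : ℝ → ℝ} {y : ℝ}

theorem natCast_div_natCast_mem_Icc (hk : k ≤ n) : (k / n : ℝ) ∈ Icc (0 : ℝ) 1 :=
  ⟨by positivity, div_le_one_of_le₀ (Nat.cast_le.2 hk) n.cast_nonneg⟩

theorem monotoneOn_Bop (n : ℕ) (hg : MonotoneOn g (Icc 0 1)) :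
    MonotoneOn (Bop n g) (Icc 0 1) :=
  monotoneOn_bernsteinForm fun _ hi _ hj hij =>
    hg (natCast_div_natCast_mem_Icc hi) (natCast_div_natCast_mem_Icc hj) (by gcongr)

theorem le_Bop_of_convexOn (hn : n ≠ 0) (hg : ConvexOn ℝ (Icc 0 1) g) (hy : y ∈ Icc (0 : ℝ) 1) :
    g y ≤ Bop n g y := by
  have barycenter : ∑ k ∈ Finset.range (n + 1), pB n k y * (k / n) = y := by
    simp only [← mul_div_assoc, ← Finset.sum_div, sum_pB_mul_natCast]
    exact mul_div_cancel_left₀ y (Nat.cast_ne_zero.2 hn)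
  have jensen := hg.map_sum_le (fun k _ => pB_nonneg n k hy) (sum_pB n y)
    fun k hk => natCast_div_natCast_mem_Icc (Finset.mem_range_succ_iff.1 hk)
  simpa only [smul_eq_mul, barycenter, Bop, mul_comm] using jensen

theorem map_natCast_div_succ_le_of_convexOn (hn : n ≠ 0) (hg : ConvexOn ℝ (Icc 0 1) g)
    (hk : k ≤ n + 1) :
    g (k / (n + 1 : ℕ)) ≤
      k / (n + 1) * g ((k - 1 : ℕ) / n) + (n + 1 - k) / (n + 1) * g (k / n) := by
  have hn_pos : (0 : ℝ) < n := Nat.cast_pos.2 (Nat.pos_of_ne_zero hn)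
  have hn_succ : (n + 1 : ℝ) ≠ 0 := by positivity
  rcases k with _ | j
  · simp [hn_succ]
  rcases hk.eq_or_lt with hj | hj
  · obtain rfl : j = n := Nat.succ_injective hj
    simp [hn_succ, hn_pos.ne']
  have hjn : j + 1 ≤ n := Nat.lt_succ_iff.1 hj
  have hweight : (0 : ℝ) ≤ n + 1 - (j + 1 : ℕ) := by
    rw [sub_nonneg]
    exact_mod_cast hk
  have jensen := hg.2 (natCast_div_natCast_mem_Icc (j.le_succ.trans hjn))
    (natCast_div_natCast_mem_Icc hjn)
    (by positivity : (0 : ℝ) ≤ (j + 1 : ℕ) / (n + 1))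
    (by positivity : (0 : ℝ) ≤ (n + 1 - (j + 1 : ℕ)) / (n + 1))
    (by field_simp; ring)
  have barycenter : ((j + 1 : ℕ) / (n + 1 : ℕ) : ℝ)
      = (j + 1 : ℕ) / (n + 1) * (j / n) + (n + 1 - (j + 1 : ℕ)) / (n + 1) * ((j + 1 : ℕ) / n) := by
    push_cast
    field_simp
    ring
  rw [barycenter]
  exact jensen

theorem Bop_succ_le_of_convexOn (hn : n ≠ 0) (hg : ConvexOn ℝ (Icc 0 1) g)
    (hy : y ∈ Icc (0 : ℝ) 1) : Bop (n + 1) g y ≤ Bop n g y := by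
  rw [Bop_eq_bernsteinForm, Bop_eq_bernsteinForm, bernsteinForm_degree_elevation n]
  exact bernsteinForm_le_bernsteinForm (fun k hk => map_natCast_div_succ_le_of_convexOn hn hg hk) hy

end BernsteinOperator

section LogQuotient

variable {x t : ℝ}

theorem log_one_add_mul_div_log_one_add_mem_Icc (hx : x ∈ Icc (0 : ℝ) 1) (ht : 0 ≤ t) :
    log (1 + x * t) / log (1 + t) ∈ Icc (0 : ℝ) 1 := by
  have hxt : 0 ≤ x * t := mul_nonneg hx.1 ht
  have hlog : 0 ≤ log (1 + t) := log_nonneg (le_add_of_nonneg_right ht)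
  refine ⟨div_nonneg (log_nonneg (le_add_of_nonneg_right hxt)) hlog, div_le_one_of_le₀ ?_ hlog⟩
  gcongr
  exact mul_le_of_le_one_left ht hx.2

theorem le_log_one_add_mul_div_log_one_add (hx : x ∈ Icc (0 : ℝ) 1) (ht : 0 < t) :
    x ≤ log (1 + x * t) / log (1 + t) := by
  have hbernoulli : (1 + t) ^ x ≤ 1 + x * t :=
    rpow_one_add_le_one_add_mul_self (by linarith) hx.1 hx.2
  rw [le_div_iff₀ (log_pos (by linarith)), ← log_rpow (by linarith)]
  exact log_le_log (by positivity) hbernoulli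

theorem monotoneOn_log_one_add_mul_div_log_one_add (hx : x ∈ Icc (0 : ℝ) 1) :
    MonotoneOn (fun t => log (1 + x * t) / log (1 + t)) (Ioi 0) := by
  intro s (hs : 0 < s) t (ht : 0 < t) hst
  have hxs : 0 ≤ x * s := mul_nonneg hx.1 hs.le
  have hxt : 0 ≤ x * t := mul_nonneg hx.1 ht.le
  have hlog_s : 0 < log (1 + s) := log_pos (by linarith)
  have hlog_t : 0 < log (1 + t) := log_pos (by linarith)
  set p := logb (1 + t) (1 + s) with hp
  have hp_nonneg : 0 ≤ p := div_nonneg hlog_s.le hlog_t.le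
  have hp_le_one : p ≤ 1 := div_le_one_of_le₀ (log_le_log (by linarith) (by linarith)) hlog_t.le
  have hrpow : (1 + t) ^ p = 1 + s := rpow_logb (by linarith) (by linarith) (by linarith)
  have hconcave : 1 + x * s ≤ (1 + x * t) ^ p := by
    have h := (concaveOn_rpow hp_nonneg hp_le_one).2 (mem_Ici.2 zero_le_one)
      (mem_Ici.2 (by linarith : 0 ≤ 1 + t)) (sub_nonneg.2 hx.2) hx.1 (sub_add_cancel 1 x)
    have hcomb : (1 - x) * 1 + x * (1 + t) = 1 + x * t := by ring
    simp only [smul_eq_mul, one_rpow, hrpow, hcomb] at h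
    linarith
  rw [div_le_iff₀ hlog_s]
  calc log (1 + x * s) ≤ log ((1 + x * t) ^ p) := log_le_log (by linarith) hconcave
    _ = p * log (1 + x * t) := log_rpow (by linarith) _
    _ = log (1 + x * t) / log (1 + t) * log (1 + s) := by rw [hp, logb]; ring

end LogQuotient

section Nodes

variable {μ x : ℝ} {n : ℕ}

theorem aFun_eq_log_one_add_mul_div_log_one_add (μ : ℝ) (n : ℕ) (x : ℝ) :
    aFun μ n x = log (1 + x * (1 / (n * (1 + μ)))) / log (1 + 1 / (n * (1 + μ))) := by
  rw [mul_one_div, aFun]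

theorem aFun_mem_Icc (hμ : -1 ≤ μ) (n : ℕ) (hx : x ∈ Icc (0 : ℝ) 1) :
    aFun μ n x ∈ Icc (0 : ℝ) 1 := by
  rw [aFun_eq_log_one_add_mul_div_log_one_add]
  have hμ_nonneg : 0 ≤ 1 + μ := by linarith
  exact log_one_add_mul_div_log_one_add_mem_Icc hx (by positivity)

theorem le_aFun (hμ : -1 < μ) (hn : n ≠ 0) (hx : x ∈ Icc (0 : ℝ) 1) : x ≤ aFun μ n x := by
  rw [aFun_eq_log_one_add_mul_div_log_one_add]
  have hμ_pos : 0 < 1 + μ := by linarith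
  exact le_log_one_add_mul_div_log_one_add hx (by positivity)

theorem aFun_succ_le (hμ : -1 < μ) (hn : n ≠ 0) (hx : x ∈ Icc (0 : ℝ) 1) :
    aFun μ (n + 1) x ≤ aFun μ n x := by
  rw [aFun_eq_log_one_add_mul_div_log_one_add, aFun_eq_log_one_add_mul_div_log_one_add]
  have hμ_pos : 0 < 1 + μ := by linarith
  refine monotoneOn_log_one_add_mul_div_log_one_add hx (mem_Ioi.2 (by positivity))
    (mem_Ioi.2 (by positivity)) ?_
  gcongr
  exact n.le_succ

end Nodes

theorem Lop_eq_logμ_mul_Bop (μ : ℝ) (n : ℕ) (f : ℝ → ℝ) (x : ℝ) :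
    Lop μ n f x = logμ μ x * Bop n (fun t => f t / logμ μ t) (aFun μ n x) := by
  simp only [Lop, Bop, mul_one_div]

theorem stmt18 (μ : ℝ) (hμ : 0 < μ) (f : ℝ → ℝ)
    (hmono : MonotoneOn (fun t => f t / logμ μ t) (Set.Icc (0:ℝ) 1))
    (hconv : ConvexOn ℝ (Set.Icc (0:ℝ) 1) (fun t => f t / logμ μ t))
    (n : ℕ) (hn : 0 < n) (x : ℝ) (hx : x ∈ Set.Ioo (0:ℝ) 1) :
    Lop μ (n + 1) f x ≤ Lop μ n f x ∧ f x ≤ Lop μ (n + 1) f x := by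
  have hμ' : -1 < μ := by linarith
  have hx' : x ∈ Icc (0 : ℝ) 1 := Ioo_subset_Icc_self hx
  have hlog : 0 < logμ μ x := log_pos (by linarith [hx.1])
  have ha (m : ℕ) : aFun μ m x ∈ Icc (0 : ℝ) 1 := aFun_mem_Icc hμ'.le m hx'
  rw [Lop_eq_logμ_mul_Bop, Lop_eq_logμ_mul_Bop]
  constructor
  · refine mul_le_mul_of_nonneg_left ?_ hlog.le
    exact (Bop_succ_le_of_convexOn hn.ne' hconv (ha _)).trans
      (monotoneOn_Bop n hmono (ha _) (ha _) (aFun_succ_le hμ' hn.ne' hx'))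
  · rw [← div_le_iff₀' hlog]
    exact (hmono hx' (ha _) (le_aFun hμ' n.succ_ne_zero hx')).trans
      (le_Bop_of_convexOn n.succ_ne_zero hconv (ha _))
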